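/- Nonexistence of positive λ-harmonic functions above the bottom of the spectrum (finite-kernel step): let B be a finite connected subgraph with Dirichlet Laplacian Δ_B having smallest eigenvalue λ₀ with positive eigenfunction φ₀ on int B. If v is a positive function on the graph satisfying Δv = λv with λ > λ₀, then the inequality v(x) ≥ e^{(λ−λ₀)t} e^{λ₀ t} Σ_{y∈B} p^B_t(x,y) v(y), combined with lim_{t→∞} e^{λ₀ t} p^B_t(x,y) = φ₀(x)φ₀(y), yields a contradiction; hence any λ admitting a positive λ-harmonic function satisfies λ ≤ λ₀(Δ_B) for every finite connected ball B, and thus λ ≤ λ₀(Δ). -/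

import Mathlib

/-! The heat-kernel argument is replaced by the ground state transform, which gives the bound
directly. Since `l * f x ^ 2 = ∑ y ∼ x, (1 - v y / v x) * f x ^ 2`, the difference
`⟨Δf, f⟩ - l * ‖f‖²` is the sum of `gap v f x y` over ordered adjacent pairs with `x` in the
support `S` of `f`. Pairs with `y ∉ S` contribute a nonnegative amount, and on pairs inside `S`
the contributions of `(x, y)` and `(y, x)` add up to
`v x * v y * (f x / v x - f y / v y) ^ 2`, which is nonnegative (`gap_add_gap_nonneg`). -/

open Finset

/-- The graph Laplacian `Δf(x) = ∑_{y ∼ x} (f(x) - f(y))`. -/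
def graphLap {V : Type*} (G : SimpleGraph V) [G.LocallyFinite] (f : V → ℝ) (x : V) : ℝ :=
  ∑ y ∈ G.neighborFinset x, (f x - f y)

/-- The contribution of the ordered edge `(x, y)` to `⟨Δf, f⟩ - l * ‖f‖²` when `Δv = l * v`. -/
noncomputable def gap {V : Type*} (v f : V → ℝ) (x y : V) : ℝ :=
  v y / v x * f x ^ 2 - f x * f y

theorem gap_add_gap_nonneg {V : Type*} {v : V → ℝ} (hv : ∀ x, 0 < v x) (f : V → ℝ) (x y : V) :
    0 ≤ gap v f x y + gap v f y x := by
  have hx := hv x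
  have hy := hv y
  have h : gap v f x y + gap v f y x = v x * v y * (f x / v x - f y / v y) ^ 2 := by
    unfold gap
    field_simp
    ring
  rw [h]
  positivity

theorem graphLap_mul_sub_eq_sum_gap {V : Type*} (G : SimpleGraph V) [G.LocallyFinite] {l : ℝ}
    {v : V → ℝ} (f : V → ℝ) {x : V} (hv : 0 < v x) (hharm : graphLap G v x = l * v x) :
    graphLap G f x * f x - l * f x ^ 2 = ∑ y ∈ G.neighborFinset x, gap v f x y := by
  have hl : l = graphLap G v x / v x := by
    rw [hharm]
    field_simp
  rw [hl]
  unfold graphLap gap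
  rw [Finset.sum_mul, Finset.sum_div, Finset.sum_mul, ← Finset.sum_sub_distrib]
  refine Finset.sum_congr rfl fun y _ => ?_
  field_simp
  ring

open Classical in
/-- Symmetrizing over the two orientations of each edge inside a finite set. -/
theorem sum_gap_inside_nonneg {V : Type*} (G : SimpleGraph V) {v : V → ℝ} (hv : ∀ x, 0 < v x)
    (f : V → ℝ) (S : Finset V) :
    0 ≤ ∑ x ∈ S, ∑ y ∈ S, if G.Adj x y then gap v f x y else 0 := by
  have hswap : (∑ x ∈ S, ∑ y ∈ S, if G.Adj x y then gap v f x y else 0) =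
      ∑ x ∈ S, ∑ y ∈ S, if G.Adj x y then gap v f y x else 0 := by
    rw [Finset.sum_comm]
    simp only [G.adj_comm]
  have hsum : 0 ≤ (∑ x ∈ S, ∑ y ∈ S, if G.Adj x y then gap v f x y else 0) +
      ∑ x ∈ S, ∑ y ∈ S, if G.Adj x y then gap v f y x else 0 := by
    simp only [← Finset.sum_add_distrib]
    refine Finset.sum_nonneg fun x _ => Finset.sum_nonneg fun y _ => ?_
    split_ifs
    · exact gap_add_gap_nonneg hv f x y
    · simp
  linarith

/-- **No positive λ-harmonic functions above the bottom of the spectrum.**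
Let `G` be an infinite, locally finite, connected graph.  If `v > 0` satisfies
`Δv = λv` everywhere, then `λ ≤ λ₀(Δ)`: in Rayleigh-quotient form, for every finitely
supported function `f`, `λ ∑ f(x)² ≤ ⟨Δf, f⟩ = ∑ Δf(x) f(x)`. -/
theorem lambda_le_bottom_of_spectrum {V : Type*} [Infinite V] (G : SimpleGraph V)
    [G.LocallyFinite] (hG : G.Connected)
    (l : ℝ) (v : V → ℝ) (hv : ∀ x, 0 < v x)
    (hharm : ∀ x, graphLap G v x = l * v x) :
    ∀ f : V → ℝ, (Function.support f).Finite →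
      l * ∑' x : V, f x ^ 2 ≤ ∑' x : V, graphLap G f x * f x := by
  classical
  intro f hf
  have hzero : ∀ x ∉ hf.toFinset, f x = 0 := by simp
  rw [tsum_eq_sum (s := hf.toFinset) fun x hx => by simp [hzero x hx],
    tsum_eq_sum (s := hf.toFinset) fun x hx => by simp [hzero x hx],
    Finset.mul_sum, ← sub_nonneg, ← Finset.sum_sub_distrib]
  refine (sum_gap_inside_nonneg G hv f hf.toFinset).trans
    (Finset.sum_le_sum fun x _ => ?_)
  rw [graphLap_mul_sub_eq_sum_gap G f (hv x) (hharm x), ← Finset.sum_filter]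
  refine Finset.sum_le_sum_of_subset_of_nonneg (fun y hy => ?_) fun y hy hyS => ?_
  · simpa using (Finset.mem_filter.1 hy).2
  · -- an edge leaving the support of `f`: the cross term vanishes
    have hfy : f y = 0 := hzero y fun h =>
      hyS (Finset.mem_filter.2 ⟨h, by simpa using hy⟩)
    have hx := hv x
    have hy' := hv y
    unfold gap
    rw [hfy, mul_zero, sub_zero]
    positivity
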